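/- arXiv:1502.06159 — 2 statements merged into one kernel-verified Lean document; each statement's English description precedes it below -/
import Mathlib

section
/- Let X and Y be normed linear spaces, (x̄,ȳ) ∈ X×Y, and f : X×Y → ℝ∪{+∞} with f(x̄,ȳ)=0 satisfying (P1) and (P2). Then for every ρ>0 and every (x,y) ∈ X×Y with f(x,y) < ∞, the ρ-slope is estimated by the subdifferential ρ²-slope: |∇f|_ρ(x,y) ≤ |∂f|_{ρ²}(x,y) + ρ. -/
open Filter Metric Set Topology ENNReal

/-- The parametric metric `d_ρ((x,y),(u,v)) = max{‖x−u‖, ρ‖y−v‖}` on a product. -/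
noncomputable def dRho {X Y : Type*} [NormedAddCommGroup X] [NormedAddCommGroup Y]
    (ρ : ℝ) (p q : X × Y) : ℝ :=
  max (dist p.1 q.1) (ρ * dist p.2 q.2)

/-- The (local) ρ-slope `|∇f|_ρ(x,y)` of `f` at `p = (x,y)`. -/
noncomputable def slopeRho {X Y : Type*} [NormedAddCommGroup X] [NormedAddCommGroup Y]
    (f : X × Y → EReal) (ρ : ℝ) (p : X × Y) : ℝ≥0∞ :=
  Filter.limsup
    (fun q => ENNReal.ofReal (max ((f p - f q).toReal) 0) / ENNReal.ofReal (dRho ρ q p))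
    (𝓝[≠] p)

/-- The Fréchet subdifferential of an extended-real-valued function on a product of
normed spaces, as a set of pairs of continuous linear functionals: `(x*,y*) ∈ ∂f(x,y)`
iff `f(x,y)` is finite and
`liminf_{(u,v)→(x,y)} [f(u,v)−f(x,y)−⟨x*,u−x⟩−⟨y*,v−y⟩]/‖(u,v)−(x,y)‖ ≥ 0`
(expressed in the equivalent ε-form). -/
def prodFSubdiff {X Y : Type*} [NormedAddCommGroup X] [NormedSpace ℝ X]
    [NormedAddCommGroup Y] [NormedSpace ℝ Y]
    (f : X × Y → EReal) (p : X × Y) : Set ((X →L[ℝ] ℝ) × (Y →L[ℝ] ℝ)) :=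
  {s | f p ≠ ⊤ ∧ ∀ ε : ℝ, 0 < ε → ∀ᶠ q : X × Y in 𝓝 p,
    f p + ((s.1 (q.1 - p.1) + s.2 (q.2 - p.2) - ε * ‖q - p‖ : ℝ) : EReal) ≤ f q}

/-- The subdifferential ρ-slope `|∂f|_ρ(x,y) = inf{‖x*‖ : (x*,y*) ∈ ∂f(x,y), ‖y*‖ < ρ}`. -/
noncomputable def subdiffSlopeRho {X Y : Type*} [NormedAddCommGroup X] [NormedSpace ℝ X]
    [NormedAddCommGroup Y] [NormedSpace ℝ Y]
    (f : X × Y → EReal) (ρ : ℝ) (p : X × Y) : ℝ≥0∞ :=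
  ⨅ (s : (X →L[ℝ] ℝ) × (Y →L[ℝ] ℝ)) (_ : s ∈ prodFSubdiff f p ∧ ‖s.2‖ < ρ),
    ENNReal.ofReal ‖s.1‖

/-- Proposition "Relationships between slopes" (iv):
`|∇f|_ρ(x,y) ≤ |∂f|_{ρ²}(x,y) + ρ` for all `ρ > 0` and all `(x,y)` with `f(x,y) < ∞`. -/
theorem slope_le_subdiff_slope {X Y : Type*}
    [NormedAddCommGroup X] [NormedSpace ℝ X] [NormedAddCommGroup Y] [NormedSpace ℝ Y]
    (xbar : X) (ybar : Y) (f : X × Y → EReal)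
    (hfbot : ∀ p : X × Y, f p ≠ ⊥)
    (hf0 : f (xbar, ybar) = 0)
    (hP1 : ∀ p : X × Y, p.2 ≠ ybar → 0 < f p)
    (hP2 : ∃ c : ℝ, 0 < c ∧ ∃ ε : ℝ, 0 < ε ∧ ∀ p : X × Y,
      0 < f p → f p < (ε : EReal) → ((c * dist p.2 ybar : ℝ) : EReal) ≤ f p)
    (ρ : ℝ) (hρ : 0 < ρ) (p : X × Y) (hfp : f p < ⊤) :
    slopeRho f ρ p ≤ subdiffSlopeRho f (ρ ^ 2) p + ENNReal.ofReal ρ := by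
  unfold slopeRho subdiffSlopeRho
  rw [ENNReal.iInf_add]
  refine le_iInf fun s => ?_
  rw [ENNReal.iInf_add]
  refine le_iInf fun hs => ?_
  obtain ⟨⟨-, hsub⟩, hs2⟩ := hs
  refine ENNReal.le_of_forall_pos_le_add fun δ hδ _ => ?_
  have hδ' : (0 : ℝ) < δ := hδ
  have hk : 0 < 1 + 1 / ρ := by positivity
  have hε : 0 < (δ : ℝ) / (1 + 1 / ρ) := by positivity
  have hmain : ENNReal.ofReal ‖s.1‖ + ENNReal.ofReal ρ + (δ : ℝ≥0∞)
      = ENNReal.ofReal (‖s.1‖ + ρ + δ) := by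
    rw [ENNReal.ofReal_add (by positivity) hδ'.le, ENNReal.ofReal_add (by positivity) hρ.le,
      ENNReal.ofReal_coe_nnreal]
  rw [hmain]
  refine Filter.limsup_le_of_le (h := ?_)
  filter_upwards [nhdsWithin_le_nhds (hsub _ hε), self_mem_nhdsWithin] with q hq hne
  have hne' : q ≠ p := hne
  have hx : ‖q.1 - p.1‖ ≤ dRho ρ q p := by
    rw [← dist_eq_norm]; exact le_max_left _ _
  have hy : ρ * ‖q.2 - p.2‖ ≤ dRho ρ q p := by
    rw [← dist_eq_norm]; exact le_max_right _ _
  have hd : 0 < dRho ρ q p := by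
    by_contra hcon
    push Not at hcon
    apply hne'
    have h1 : ‖q.1 - p.1‖ ≤ 0 := hx.trans hcon
    have h2 : ‖q.2 - p.2‖ ≤ 0 := by
      have := hy.trans hcon
      exact nonpos_of_mul_nonpos_right this hρ
    exact Prod.ext (sub_eq_zero.1 (norm_le_zero_iff.1 h1)) (sub_eq_zero.1 (norm_le_zero_iff.1 h2))
  have hy' : ‖q.2 - p.2‖ ≤ 1 / ρ * dRho ρ q p := by
    rw [one_div, ← div_eq_inv_mul, le_div_iff₀ hρ]; linarith
  have hn : ‖q - p‖ ≤ (1 + 1 / ρ) * dRho ρ q p := by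
    have h1 : 0 ≤ 1 / ρ * dRho ρ q p := by positivity
    rw [Prod.norm_def]
    refine max_le ?_ ?_
    · rw [Prod.fst_sub]; linarith
    · rw [Prod.snd_sub]; linarith
  refine ENNReal.div_le_of_le_mul ?_
  rw [← ENNReal.ofReal_mul (by positivity)]
  refine ENNReal.ofReal_le_ofReal (max_le ?_ (by positivity))
  have hb := hfbot p
  have hqb := hfbot q
  revert hq hb hqb hfp
  generalize f p = a
  generalize f q = b
  intro hfp hq hb hqb
  lift a to ℝ using ⟨hfp.ne, hb⟩
  induction b with
  | bot => exact absurd rfl hqb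
  | top =>
    rw [EReal.sub_top, EReal.toReal_bot]; positivity
  | coe b =>
    rw [← EReal.coe_sub, EReal.toReal_coe]
    rw [← EReal.coe_add, EReal.coe_le_coe_iff] at hq
    have e1 : -(s.1 (q.1 - p.1)) ≤ ‖s.1‖ * dRho ρ q p :=
      (neg_le_abs _).trans ((s.1.le_opNorm _).trans
        (mul_le_mul_of_nonneg_left hx (norm_nonneg _)))
    have e2 : -(s.2 (q.2 - p.2)) ≤ ρ * dRho ρ q p := by
      have h1 : -(s.2 (q.2 - p.2)) ≤ ‖s.2‖ * ‖q.2 - p.2‖ :=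
        (neg_le_abs _).trans (s.2.le_opNorm _)
      have h2 : ‖s.2‖ * ‖q.2 - p.2‖ ≤ ρ ^ 2 * ‖q.2 - p.2‖ :=
        mul_le_mul_of_nonneg_right hs2.le (norm_nonneg _)
      have h3 := mul_le_mul_of_nonneg_left hy hρ.le
      nlinarith
    have e3 : (δ : ℝ) / (1 + 1 / ρ) * ‖q - p‖ ≤ δ * dRho ρ q p := by
      refine (mul_le_mul_of_nonneg_left hn hε.le).trans_eq ?_
      rw [← mul_assoc, div_mul_cancel₀ _ hk.ne']
    linarith
end

section
/- Let X and Y be normed linear spaces, (x̄,ȳ) ∈ X×Y, and f : X×Y → ℝ∪{+∞} with f(x̄,ȳ)=0 satisfying (P1) and (P2). If f is convex, then all the strict slopes coincide: |∇f|^>(x̄,ȳ) = |∂f|^>(x̄,ȳ) and |∇f|^{>+}(x̄,ȳ) = |∂f|^{>+}(x̄,ȳ); moreover, for all ρ>0 and all (x,y) with 0<f(x,y)<∞ one has |∇f|_ρ^◇(x,y) = max{ |∇f|_ρ(x,y), f(x,y)/d_ρ((x,y),(x̄,ȳ)) }, and |∇f|^◇(x̄,ȳ) = |∇f|^{>+}(x̄,ȳ)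 = |∇f|^>(x̄,ȳ). -/
open Filter Metric Set Topology ENNReal

/-- The strict outer slope `|∇f|^>(x̄,ȳ)`. -/
noncomputable def strictOuterSlope {X Y : Type*} [NormedAddCommGroup X] [NormedAddCommGroup Y]
    (f : X × Y → EReal) (xbar : X) (ybar : Y) : ℝ≥0∞ :=
  ⨆ (ρ : ℝ) (_ : 0 < ρ),
    ⨅ (p : X × Y) (_ : dist p.1 xbar < ρ ∧ 0 < f p ∧ f p < (ρ : EReal)),
      slopeRho f ρ p

/-- The modified strict outer slope `|∇f|^{>+}(x̄,ȳ)`. -/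
noncomputable def modStrictOuterSlope {X Y : Type*} [NormedAddCommGroup X] [NormedAddCommGroup Y]
    (f : X × Y → EReal) (xbar : X) (ybar : Y) : ℝ≥0∞ :=
  ⨆ (ρ : ℝ) (_ : 0 < ρ),
    ⨅ (p : X × Y) (_ : dist p.1 xbar < ρ ∧ 0 < f p ∧ f p < (ρ : EReal)),
      max (slopeRho f ρ p)
        (ENNReal.ofReal ((f p).toReal) / ENNReal.ofReal (dist p.1 xbar))

/-- The strict outer subdifferential slope `|∂f|^>(x̄,ȳ)`. -/
noncomputable def strictOuterSubdiffSlope {X Y : Type*} [NormedAddCommGroup X] [NormedSpace ℝ X]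
    [NormedAddCommGroup Y] [NormedSpace ℝ Y]
    (f : X × Y → EReal) (xbar : X) (ybar : Y) : ℝ≥0∞ :=
  ⨆ (ρ : ℝ) (_ : 0 < ρ),
    ⨅ (p : X × Y) (_ : dist p.1 xbar < ρ ∧ 0 < f p ∧ f p < (ρ : EReal)),
      subdiffSlopeRho f ρ p

/-- The modified strict outer subdifferential slope `|∂f|^{>+}(x̄,ȳ)`. -/
noncomputable def modStrictOuterSubdiffSlope {X Y : Type*} [NormedAddCommGroup X] [NormedSpace ℝ X]
    [NormedAddCommGroup Y] [NormedSpace ℝ Y]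
    (f : X × Y → EReal) (xbar : X) (ybar : Y) : ℝ≥0∞ :=
  ⨆ (ρ : ℝ) (_ : 0 < ρ),
    ⨅ (p : X × Y) (_ : dist p.1 xbar < ρ ∧ 0 < f p ∧ f p < (ρ : EReal)),
      max (subdiffSlopeRho f ρ p)
        (ENNReal.ofReal ((f p).toReal) / ENNReal.ofReal (dist p.1 xbar))


/-- The nonlocal ρ-slope `|∇f|_ρ^◇(x,y)` of `f` at `p = (x,y)`. -/
noncomputable def nonlocalSlopeRho {X Y : Type*} [NormedAddCommGroup X] [NormedAddCommGroup Y]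
    (f : X × Y → EReal) (ρ : ℝ) (p : X × Y) : ℝ≥0∞ :=
  ⨆ (q : X × Y) (_ : q ≠ p),
    ENNReal.ofReal (max ((f p - max (f q) 0).toReal) 0) / ENNReal.ofReal (dRho ρ p q)

/-- The uniform strict outer slope `|∇f|^◇(x̄,ȳ)`. -/
noncomputable def uniformStrictOuterSlope {X Y : Type*} [NormedAddCommGroup X] [NormedAddCommGroup Y]
    (f : X × Y → EReal) (xbar : X) (ybar : Y) : ℝ≥0∞ :=
  ⨆ (ρ : ℝ) (_ : 0 < ρ),
    ⨅ (p : X × Y) (_ : dist p.1 xbar < ρ ∧ 0 < f p ∧ f p < (ρ : EReal)),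
      nonlocalSlopeRho f ρ p

theorem aux_dRho_comm {X Y : Type*} [NormedAddCommGroup X] [NormedAddCommGroup Y]
    (ρ : ℝ) (p q : X × Y) : dRho ρ p q = dRho ρ q p := by
  simp only [dRho, dist_comm]

theorem aux_dRho_nonneg {X Y : Type*} [NormedAddCommGroup X] [NormedAddCommGroup Y]
    (ρ : ℝ) (p q : X × Y) : 0 ≤ dRho ρ p q := le_max_of_le_left dist_nonneg

theorem aux_dRho_pos {X Y : Type*} [NormedAddCommGroup X] [NormedAddCommGroup Y]
    {ρ : ℝ} (hρ : 0 < ρ) {p q : X × Y} (h : p ≠ q) : 0 < dRho ρ p q := by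
  unfold dRho
  by_cases h1 : p.1 = q.1
  · have h2 : p.2 ≠ q.2 := fun h2 => h (Prod.ext h1 h2)
    exact lt_max_of_lt_right (mul_pos hρ (dist_pos.2 h2))
  · exact lt_max_of_lt_left (dist_pos.2 h1)

theorem aux_real {X : Type*} {f : X → EReal} {p : X} (h1 : f p ≠ ⊥) (h2 : f p ≠ ⊤) :
    ∃ a : ℝ, f p = a := ⟨(f p).toReal, (EReal.coe_toReal h2 h1).symm⟩

/-- descent along segments -/
theorem aux_global {X Y : Type*}
    [NormedAddCommGroup X] [NormedSpace ℝ X] [NormedAddCommGroup Y] [NormedSpace ℝ Y]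
    (f : X × Y → EReal)
    (hfbot : ∀ p : X × Y, f p ≠ ⊥)
    (hconv : ∀ p q : X × Y, ∀ t : ℝ, 0 ≤ t → t ≤ 1 →
      f (t • p + (1 - t) • q) ≤ ((t : ℝ) : EReal) * f p + ((1 - t : ℝ) : EReal) * f q)
    {ρ : ℝ} (hρ : 0 < ρ) {p q : X × Y} (hp : f p ≠ ⊤) (hq : q ≠ p) :
    ENNReal.ofReal (max ((f p - f q).toReal) 0) / ENNReal.ofReal (dRho ρ q p)
      ≤ slopeRho f ρ p := by
  obtain ⟨a, ha⟩ := aux_real (hfbot p) hp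
  by_cases hqt : f q = ⊤
  · simp [hqt, ha]
  obtain ⟨b, hb⟩ := aux_real (hfbot q) hqt
  have hd := aux_dRho_pos hρ hq
  by_cases hab : a ≤ b
  · have : (f p - f q).toReal ≤ 0 := by
      rw [ha, hb, ← EReal.coe_sub, EReal.toReal_coe]; linarith
    simp [max_eq_right this]
  push Not at hab
  have hT : Tendsto (fun t : ℝ => t • q + (1 - t) • p) (𝓝[>] 0) (𝓝[≠] p) := by
    apply tendsto_nhdsWithin_of_tendsto_nhds_of_eventually_within
    · have : Continuous (fun t : ℝ => t • q + (1 - t) • p) := by fun_prop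
      have h := this.tendsto 0
      simp only [zero_smul, sub_zero, one_smul, zero_add] at h
      exact h.mono_left nhdsWithin_le_nhds
    · filter_upwards [self_mem_nhdsWithin] with t ht
      intro h
      have h0 : t • (q - p) = 0 := by
        have : t • q + (1 - t) • p = p := h
        rw [sub_smul, one_smul] at this
        rw [smul_sub]
        have h2 : t • q - t • p = (t • q + (p - t • p)) - p := by abel
        rw [h2, this, sub_self]
      rcases smul_eq_zero.1 h0 with h1 | h1
      · exact (ne_of_gt ht) h1
      · exact hq (sub_eq_zero.1 h1)
  unfold slopeRho
  apply Filter.le_limsup_of_frequently_le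
  · apply hT.frequently
    apply Eventually.frequently
    have h1 : ∀ᶠ t : ℝ in 𝓝[>] 0, t < 1 :=
      nhdsWithin_le_nhds (Iio_mem_nhds one_pos)
    filter_upwards [self_mem_nhdsWithin, h1] with t ht0 ht1
    have ht0 : 0 < t := ht0
    have hc := hconv q p t ht0.le ht1.le
    set z := t • q + (1 - t) • p with hz
    rw [ha, hb, ← EReal.coe_mul, ← EReal.coe_mul, ← EReal.coe_add] at hc
    obtain ⟨c, hcz⟩ := aux_real (hfbot z) (ne_top_of_le_ne_top (EReal.coe_ne_top _) hc)
    rw [hcz, EReal.coe_le_coe_iff] at hc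
    have hdz : dRho ρ z p = t * dRho ρ q p := by
      have e : z - p = t • (q - p) := by rw [hz, sub_smul, one_smul, smul_sub]; abel
      have e1 : z.1 - p.1 = t • (q.1 - p.1) := congrArg Prod.fst e
      have e2 : z.2 - p.2 = t • (q.2 - p.2) := congrArg Prod.snd e
      simp only [dRho, dist_eq_norm, e1, e2, norm_smul, Real.norm_eq_abs, abs_of_pos ht0]
      rw [mul_max_of_nonneg _ _ ht0.le]
      ring_nf
    rw [ha, hb, hcz, ← EReal.coe_sub, ← EReal.coe_sub, EReal.toReal_coe, EReal.toReal_coe, hdz,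
      ← ENNReal.ofReal_div_of_pos hd, ← ENNReal.ofReal_div_of_pos (mul_pos ht0 hd)]
    apply ENNReal.ofReal_le_ofReal
    rw [div_le_div_iff₀ hd (mul_pos ht0 hd)]
    rw [max_eq_left (by linarith)]
    have : t * (a - b) ≤ max (a - c) 0 := le_max_of_le_left (by nlinarith)
    nlinarith
  · isBoundedDefault

theorem aux_nonlocal {X Y : Type*}
    [NormedAddCommGroup X] [NormedSpace ℝ X] [NormedAddCommGroup Y] [NormedSpace ℝ Y]
    (f : X × Y → EReal)
    (hfbot : ∀ p : X × Y, f p ≠ ⊥)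
    (hconv : ∀ p q : X × Y, ∀ t : ℝ, 0 ≤ t → t ≤ 1 →
      f (t • p + (1 - t) • q) ≤ ((t : ℝ) : EReal) * f p + ((1 - t : ℝ) : EReal) * f q)
    {ρ : ℝ} (hρ : 0 < ρ) {p : X × Y} (hp0 : 0 < f p) (hp : f p ≠ ⊤) :
    nonlocalSlopeRho f ρ p = slopeRho f ρ p := by
  obtain ⟨a, ha⟩ := aux_real (hfbot p) hp
  have ha0 : 0 < a := by rw [ha] at hp0; exact_mod_cast hp0
  apply le_antisymm
  · apply iSup₂_le
    intro q hq
    refine le_trans ?_ (aux_global f hfbot hconv hρ hp hq)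
    rw [aux_dRho_comm]
    gcongr
    by_cases hqt : f q = ⊤
    · simp [hqt, ha]
    obtain ⟨b, hb⟩ := aux_real (hfbot q) hqt
    have : max (b : EReal) 0 = ((max b 0 : ℝ) : EReal) := by
      rw [← EReal.coe_zero]; exact (EReal.coe_strictMono.monotone.map_max).symm
    rw [ha, hb, this, ← EReal.coe_sub, ← EReal.coe_sub, EReal.toReal_coe, EReal.toReal_coe]
    gcongr
    exact le_max_left _ _
  · by_cases hev : ∀ᶠ q in 𝓝[≠] p, 0 ≤ f q
    · unfold slopeRho
      apply Filter.limsup_le_of_le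
      · isBoundedDefault
      filter_upwards [hev, self_mem_nhdsWithin] with q hq hne
      refine le_trans ?_ (le_iSup₂ (f := fun (q : X × Y) (_ : q ≠ p) => 
        ENNReal.ofReal (max ((f p - max (f q) 0).toReal) 0) / ENNReal.ofReal (dRho ρ p q)) q hne)
      rw [max_eq_left hq, aux_dRho_comm]
    · have hT : Tendsto (fun q => ENNReal.ofReal a / ENNReal.ofReal (dRho ρ p q)) (𝓝[≠] p) (𝓝 ⊤) := by
        have hc : Continuous (fun q => dRho ρ p q) := by unfold dRho; fun_prop
        have h0 := (hc.tendsto p).mono_left (nhdsWithin_le_nhds (s := {p}ᶜ))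
        have h00 : dRho ρ p p = 0 := by simp [dRho]
        rw [h00] at h0
        have h1 := ENNReal.Tendsto.const_div (a := ENNReal.ofReal a) (ENNReal.tendsto_ofReal h0) (Or.inr ENNReal.ofReal_ne_top)
        have h2 : ENNReal.ofReal a / ENNReal.ofReal 0 = ⊤ := by
          rw [ENNReal.ofReal_zero]; exact ENNReal.div_zero (by simpa using ha0)
        rwa [h2] at h1
      have : nonlocalSlopeRho f ρ p = ⊤ := by
        apply ENNReal.eq_top_of_forall_nnreal_le
        intro r
        have hf : ∃ᶠ q in 𝓝[≠] p, ¬ 0 ≤ f q := not_eventually.1 hev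
        obtain ⟨q, ⟨hq, hr⟩, hne⟩ := ((hf.and_eventually (hT.eventually (lt_mem_nhds (ENNReal.coe_lt_top (r := r))))).and_eventually self_mem_nhdsWithin).exists
        refine hr.le.trans (le_trans ?_ (le_iSup₂ (f := fun (q : X × Y) (_ : q ≠ p) => 
          ENNReal.ofReal (max ((f p - max (f q) 0).toReal) 0) / ENNReal.ofReal (dRho ρ p q)) q hne))
        rw [max_eq_right (not_le.1 hq).le, ha, sub_zero, EReal.toReal_coe, max_eq_left ha0.le]
      rw [this]; exact le_top

/-- the subgradient -/
theorem aux_HB {X Y : Type*}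
    [NormedAddCommGroup X] [NormedSpace ℝ X] [NormedAddCommGroup Y] [NormedSpace ℝ Y]
    (f : X × Y → EReal)
    (hfbot : ∀ p : X × Y, f p ≠ ⊥)
    (hconv : ∀ p q : X × Y, ∀ t : ℝ, 0 ≤ t → t ≤ 1 →
      f (t • p + (1 - t) • q) ≤ ((t : ℝ) : EReal) * f p + ((1 - t : ℝ) : EReal) * f q)
    {ρ : ℝ} (hρ : 0 < ρ) {p : X × Y} (hp : f p ≠ ⊤) {γ : ℝ} (hγ : 0 < γ)
    (hs : slopeRho f ρ p < ENNReal.ofReal γ) :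
    ∃ s ∈ prodFSubdiff f p, ‖s.1‖ ≤ γ ∧ ‖s.2‖ ≤ γ * ρ := by
  obtain ⟨a, ha⟩ := aux_real (hfbot p) hp
  -- global estimate
  have hglob : ∀ q : X × Y, ∀ b : ℝ, f q ≤ b → a - γ * dRho ρ q p ≤ b := by
    intro q b hqb
    by_cases hq : q = p
    · subst hq
      rw [ha, EReal.coe_le_coe_iff] at hqb
      simp [dRho, hqb]
    obtain ⟨c, hc⟩ := aux_real (hfbot q) (ne_top_of_le_ne_top (EReal.coe_ne_top _) hqb)
    rw [hc, EReal.coe_le_coe_iff] at hqb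
    have hd := aux_dRho_pos hρ hq
    have h := (aux_global f hfbot hconv hρ hp hq).trans_lt hs
    rw [ha, hc, ← EReal.coe_sub, EReal.toReal_coe, ← ENNReal.ofReal_div_of_pos hd,
      ENNReal.ofReal_lt_ofReal_iff hγ, div_lt_iff₀ hd] at h
    have := le_max_left (a - c) 0
    linarith
  set A : Set ((X × Y) × ℝ) := {z | z.2 < a - γ * dRho ρ z.1 p} with hA
  set B : Set ((X × Y) × ℝ) := {z | f z.1 ≤ (z.2 : EReal)} with hB
  have hAo : IsOpen A := by
    apply isOpen_lt continuous_snd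
    unfold dRho; fun_prop
  have hdc : ConvexOn ℝ univ (fun q : X × Y => dRho ρ q p) := by
    have h1 : ConvexOn ℝ univ (fun q : X × Y => dist q.1 p.1) :=
      (convexOn_univ_dist p.1).comp_linearMap (LinearMap.fst ℝ X Y)
    have h2 : ConvexOn ℝ univ (fun q : X × Y => dist q.2 p.2) :=
      (convexOn_univ_dist p.2).comp_linearMap (LinearMap.snd ℝ X Y)
    exact h1.sup (h2.smul hρ.le)
  have hAc : Convex ℝ A := by
    intro z hz w hw s t hs0 ht0 hst
    have h := hdc.2 (mem_univ z.1) (mem_univ w.1) hs0 ht0 hst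
    simp only [hA, mem_ofPred_eq, smul_eq_mul, Prod.snd_add, Prod.smul_snd, Prod.fst_add, Prod.smul_fst] at hz hw h ⊢
    have h3 := mul_le_mul_of_nonneg_left h hγ.le
    have h4 : s * z.2 + t * w.2 < s * (a - γ * dRho ρ z.1 p) + t * (a - γ * dRho ρ w.1 p) := by
      rcases hs0.eq_or_lt with h5 | h5
      · have : t = 1 := by linarith
        subst this; subst h5; linarith
      · have := mul_lt_mul_of_pos_left hz h5
        have := mul_le_mul_of_nonneg_left hw.le ht0
        linarith
    have : s * a + t * a = a := by rw [← add_mul, hst, one_mul]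
    nlinarith
  have hBc : Convex ℝ B := by
    intro z hz w hw s t hs0 ht0 hst
    have ht : t = 1 - s := by linarith
    subst ht
    simp only [hB, mem_ofPred_eq, smul_eq_mul, Prod.snd_add, Prod.smul_snd, Prod.fst_add, Prod.smul_fst] at hz hw ⊢
    refine (hconv z.1 w.1 s hs0 (by linarith)).trans ?_
    obtain ⟨b, hb⟩ := aux_real (hfbot z.1) (ne_top_of_le_ne_top (EReal.coe_ne_top _) hz)
    obtain ⟨c, hc⟩ := aux_real (hfbot w.1) (ne_top_of_le_ne_top (EReal.coe_ne_top _) hw)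
    rw [hb] at hz ⊢
    rw [hc] at hw ⊢
    rw [EReal.coe_le_coe_iff] at hz hw
    rw [← EReal.coe_mul, ← EReal.coe_mul, ← EReal.coe_add, EReal.coe_le_coe_iff]
    gcongr
  have hdisj : Disjoint A B := by
    rw [Set.disjoint_left]
    intro z hz hz'
    have := hglob z.1 z.2 hz'
    simp only [hA, mem_ofPred_eq] at hz
    linarith
  obtain ⟨φ, u, hφA, hφB⟩ := geometric_hahn_banach_open hAc hAo hBc hdisj
  have hdec : ∀ (q : X × Y) (t : ℝ), φ (q, t) = φ (q, 0) + t * φ (0, 1) := by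
    intro q t
    have : ((q, t) : (X × Y) × ℝ) = (q, 0) + t • (0, 1) := by simp
    rw [this, map_add, map_smul, smul_eq_mul]
  have hpp : dRho ρ p p = 0 := by simp [dRho]
  set α := φ ((0 : X × Y), (1 : ℝ)) with hα
  have hpB : u ≤ φ (p, a) := hφB _ (by simp [hB, ha])
  have hα0 : 0 < α := by
    have h1 : φ (p, a - 1) < u := hφA _ (by simp [hA, hpp])
    rw [hdec] at h1 hpB
    nlinarith
  have hcl : ∀ q : X × Y, φ (q, 0) + (a - γ * dRho ρ q p) * α ≤ u := by
    intro q
    apply le_of_forall_pos_lt_add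
    intro ε hε
    have h1 : φ (q, a - γ * dRho ρ q p - ε / α) < u := hφA _ (by simp [hA]; positivity)
    rw [hdec, sub_mul _ (ε / α), div_mul_cancel₀ _ hα0.ne'] at h1
    linarith
  have hu : φ (p, 0) + a * α = u := by
    apply le_antisymm
    · have := hcl p
      rw [hpp] at this; simpa using this
    · rw [hdec] at hpB; exact hpB
  -- define the functional
  let L : (X × Y) →L[ℝ] ℝ := (-α⁻¹) • (φ.comp (ContinuousLinearMap.inl ℝ (X × Y) ℝ))
  have hL : ∀ h, L h = -(α⁻¹ * φ (h, 0)) := by intro h; simp [L]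
  have hsub0 : ∀ h : X × Y, φ (p + h, 0) = φ (p, 0) + φ (h, 0) := by
    intro h
    rw [← map_add]; simp
  have hLle : ∀ h : X × Y, - L h ≤ γ * dRho ρ (p + h) p := by
    intro h
    have h1 := hcl (p + h)
    rw [hsub0, ← hu] at h1
    rw [hL, neg_neg, inv_mul_le_iff₀ hα0]
    nlinarith
  have hdr : ∀ h : X × Y, dRho ρ (p + h) p = max ‖h.1‖ (ρ * ‖h.2‖) := by
    intro h; simp [dRho]
  have habs : ∀ h : X × Y, |L h| ≤ γ * max ‖h.1‖ (ρ * ‖h.2‖) := by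
    intro h
    rw [abs_le']
    constructor
    · have := hLle (-h)
      rw [hdr] at this
      simpa using this
    · have := hLle h
      rwa [hdr] at this
  refine ⟨(L.comp (ContinuousLinearMap.inl ℝ X Y), L.comp (ContinuousLinearMap.inr ℝ X Y)), ⟨hp, ?_⟩, ?_, ?_⟩
  · intro ε hε
    apply Eventually.of_forall
    intro q
    by_cases hqt : f q = ⊤
    · rw [hqt]; exact le_top
    obtain ⟨c, hc⟩ := aux_real (hfbot q) hqt
    have h1 : u ≤ φ (q, c) := hφB _ (by simp [hB, hc])
    rw [hdec, ← hu] at h1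
    have h2 := hsub0 (q - p)
    rw [add_sub_cancel] at h2
    rw [h2] at h1
    have h3 : L.comp (ContinuousLinearMap.inl ℝ X Y) (q.1 - p.1) + L.comp (ContinuousLinearMap.inr ℝ X Y) (q.2 - p.2) = L (q - p) := by
      simp only [ContinuousLinearMap.comp_apply, ContinuousLinearMap.inl_apply, ContinuousLinearMap.inr_apply]
      rw [← map_add]
      congr 1
      ext <;> simp
    simp only
    rw [h3, ha, hc, ← EReal.coe_add, EReal.coe_le_coe_iff]
    have h4 : L (q - p) ≤ c - a := by
      rw [hL, neg_le, le_inv_mul_iff₀ hα0]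
      nlinarith
    have : 0 ≤ ε * ‖q - p‖ := by positivity
    linarith
  · apply ContinuousLinearMap.opNorm_le_bound _ hγ.le
    intro x
    have := habs (x, 0)
    simpa using this
  · apply ContinuousLinearMap.opNorm_le_bound _ (by positivity)
    intro y
    have := habs (0, y)
    simp only [norm_zero] at this
    rw [max_eq_right (by positivity), ← mul_assoc] at this
    simpa using this

theorem aux_subdiff_le {X Y : Type*}
    [NormedAddCommGroup X] [NormedSpace ℝ X] [NormedAddCommGroup Y] [NormedSpace ℝ Y]
    (f : X × Y → EReal)
    (hfbot : ∀ p : X × Y, f p ≠ ⊥)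
    (hconv : ∀ p q : X × Y, ∀ t : ℝ, 0 ≤ t → t ≤ 1 →
      f (t • p + (1 - t) • q) ≤ ((t : ℝ) : EReal) * f p + ((1 - t : ℝ) : EReal) * f q)
    {ρ ρ' : ℝ} (hρ : 0 < ρ) {p : X × Y} (hp : f p ≠ ⊤) {γ : ℝ} (hγ : 0 < γ)
    (hρ' : γ * ρ < ρ')
    (hs : slopeRho f ρ p < ENNReal.ofReal γ) :
    subdiffSlopeRho f ρ' p ≤ ENNReal.ofReal γ := by
  obtain ⟨s, hs1, hs2, hs3⟩ := aux_HB f hfbot hconv hρ hp hγ hs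
  exact iInf₂_le_of_le s ⟨hs1, hs3.trans_lt hρ'⟩ (ENNReal.ofReal_le_ofReal hs2)

/-- slope bounded by subdifferential slope -/
theorem aux_slope_le {X Y : Type*}
    [NormedAddCommGroup X] [NormedSpace ℝ X] [NormedAddCommGroup Y] [NormedSpace ℝ Y]
    (f : X × Y → EReal)
    (hfbot : ∀ p : X × Y, f p ≠ ⊥)
    {ρ ρ' : ℝ} (hρ : 0 < ρ) {p : X × Y} (hρ' : ρ' ≤ ρ * ρ) :
    slopeRho f ρ p ≤ subdiffSlopeRho f ρ' p + ENNReal.ofReal ρ := by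
  unfold subdiffSlopeRho
  simp only [ENNReal.iInf_add]
  refine le_iInf₂ ?_
  rintro s ⟨⟨hp, hs⟩, hs2⟩
  obtain ⟨a, ha⟩ := aux_real (hfbot p) hp
  apply _root_.le_of_forall_pos_le_add
  intro η hη
  by_cases hηt : η = ⊤
  · simp [hηt]
  have hη' : 0 < η.toReal := ENNReal.toReal_pos hη.ne' hηt
  set e := η.toReal with he
  have hη2 : η = ENNReal.ofReal e := (ENNReal.ofReal_toReal hηt).symm
  set K := 1 + ρ⁻¹ with hK
  have hK0 : 0 < K := by positivity
  unfold slopeRho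
  apply Filter.limsup_le_of_le
  · isBoundedDefault
  filter_upwards [nhdsWithin_le_nhds (hs (e / K) (by positivity)), self_mem_nhdsWithin] with q hq hne
  have hd := aux_dRho_pos hρ (show q ≠ p from hne)
  rw [hη2, ← ENNReal.ofReal_add (norm_nonneg _) hρ.le, ← ENNReal.ofReal_add (by positivity) hη'.le,
    ← ENNReal.ofReal_div_of_pos hd]
  apply ENNReal.ofReal_le_ofReal
  rw [div_le_iff₀ hd]
  apply max_le _ (by positivity)
  by_cases hqt : f q = ⊤
  · simp only [ha, hqt, EReal.sub_top, EReal.toReal_bot]; positivity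
  obtain ⟨c, hc⟩ := aux_real (hfbot q) hqt
  rw [ha, hc, ← EReal.coe_add, EReal.coe_le_coe_iff] at hq
  rw [ha, hc, ← EReal.coe_sub, EReal.toReal_coe]
  set d := dRho ρ q p with hdd
  have hx : ‖q.1 - p.1‖ ≤ d := by rw [← dist_eq_norm]; exact le_max_left _ _
  have hy : ρ * ‖q.2 - p.2‖ ≤ d := by rw [← dist_eq_norm]; exact le_max_right _ _
  have hy' : ‖q.2 - p.2‖ ≤ ρ⁻¹ * d := by rwa [le_inv_mul_iff₀ hρ]
  have hn : ‖q - p‖ ≤ K * d := by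
    rw [Prod.norm_def]
    apply max_le
    · refine hx.trans ?_
      have : 0 ≤ ρ⁻¹ * d := by positivity
      rw [hK]; linarith
    · refine hy'.trans ?_
      rw [hK]; linarith
  have h1 : -s.1 (q.1 - p.1) ≤ ‖s.1‖ * d := by
    have := (neg_abs_le (s.1 (q.1 - p.1)))
    have h2 := s.1.le_opNorm (q.1 - p.1)
    rw [Real.norm_eq_abs] at h2
    have := mul_le_mul_of_nonneg_left hx (norm_nonneg s.1)
    linarith
  have h2 : -s.2 (q.2 - p.2) ≤ ρ * d := by
    have := (neg_abs_le (s.2 (q.2 - p.2)))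
    have h2 := s.2.le_opNorm (q.2 - p.2)
    rw [Real.norm_eq_abs] at h2
    have h3 := mul_le_mul_of_nonneg_right (hs2.le.trans hρ') (norm_nonneg (q.2 - p.2))
    have h4 := mul_le_mul_of_nonneg_left hy hρ.le
    linarith
  have h3 : e / K * ‖q - p‖ ≤ e * d := by
    rw [div_mul_eq_mul_div, div_le_iff₀ hK0]
    nlinarith
  nlinarith

theorem aux_slope_anti {X Y : Type*} [NormedAddCommGroup X] [NormedAddCommGroup Y]
    (f : X × Y → EReal) {ρ ρ' : ℝ} (h : ρ ≤ ρ') (p : X × Y) :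
    slopeRho f ρ' p ≤ slopeRho f ρ p := by
  unfold slopeRho
  apply Filter.limsup_le_limsup
  · apply Eventually.of_forall
    intro q
    have : dRho ρ q p ≤ dRho ρ' q p :=
      max_le_max le_rfl (mul_le_mul_of_nonneg_right h dist_nonneg)
    exact ENNReal.div_le_div_left (ENNReal.ofReal_le_ofReal this) _
  · isBoundedDefault
  · isBoundedDefault

theorem aux_eq {X Y : Type*}
    [NormedAddCommGroup X] [NormedSpace ℝ X] [NormedAddCommGroup Y] [NormedSpace ℝ Y]
    (xbar : X) (f : X × Y → EReal)
    (hfbot : ∀ p : X × Y, f p ≠ ⊥)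
    (hconv : ∀ p q : X × Y, ∀ t : ℝ, 0 ≤ t → t ≤ 1 →
      f (t • p + (1 - t) • q) ≤ ((t : ℝ) : EReal) * f p + ((1 - t : ℝ) : EReal) * f q)
    (g : X × Y → ℝ≥0∞) :
    (⨆ (ρ : ℝ) (_ : 0 < ρ),
      ⨅ (p : X × Y) (_ : dist p.1 xbar < ρ ∧ 0 < f p ∧ f p < (ρ : EReal)),
        max (slopeRho f ρ p) (g p)) =
    (⨆ (ρ : ℝ) (_ : 0 < ρ),
      ⨅ (p : X × Y) (_ : dist p.1 xbar < ρ ∧ 0 < f p ∧ f p < (ρ : EReal)),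
        max (subdiffSlopeRho f ρ p) (g p)) := by
  apply le_antisymm
  · apply iSup₂_le
    intro ρ0 hρ0
    apply _root_.le_of_forall_pos_le_add
    intro η hη
    -- choose a small radius
    obtain ⟨ρ, hρ, hρρ0, hρη⟩ : ∃ ρ : ℝ, 0 < ρ ∧ ρ ≤ ρ0 ∧ ENNReal.ofReal ρ ≤ η := by
      by_cases hηt : η = ⊤
      · exact ⟨ρ0, hρ0, le_rfl, by simp [hηt]⟩
      refine ⟨min ρ0 η.toReal, lt_min hρ0 (ENNReal.toReal_pos hη.ne' hηt), min_le_left _ _, ?_⟩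
      exact (ENNReal.ofReal_le_ofReal (min_le_right _ _)).trans ENNReal.ofReal_toReal_le
    set ρ' := min ρ (ρ * ρ) with hρ'
    have hρ'0 : 0 < ρ' := lt_min hρ (by positivity)
    refine le_trans ?_ (add_le_add_left (le_iSup₂ (f := fun (ρ : ℝ) (_ : 0 < ρ) =>
      ⨅ (p : X × Y) (_ : dist p.1 xbar < ρ ∧ 0 < f p ∧ f p < (ρ : EReal)),
        max (subdiffSlopeRho f ρ p) (g p)) ρ' hρ'0) η)
    simp only [ENNReal.iInf_add]
    apply le_iInf₂
    rintro p ⟨h1, h2, h3⟩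
    have hle : ρ' ≤ ρ0 := (min_le_left _ _).trans hρρ0
    refine iInf₂_le_of_le p ⟨h1.trans_le hle, h2, h3.trans_le (EReal.coe_le_coe_iff.2 hle)⟩ ?_
    apply max_le
    · refine (aux_slope_anti f hρρ0 p).trans ?_
      refine (aux_slope_le f hfbot hρ (ρ' := ρ') (min_le_right _ _)).trans ?_
      exact add_le_add (le_max_left _ _) hρη
    · exact (le_max_right _ _).trans le_self_add
  · apply iSup₂_le
    intro ρ0 hρ0
    apply le_of_forall_gt_imp_ge_of_dense
    intro γ' hγ'
    by_cases hγt : γ' = ⊤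
    · simp [hγt]
    have hγ0 : 0 < γ'.toReal := ENNReal.toReal_pos (ne_bot_of_gt hγ') hγt
    have hγe : γ' = ENNReal.ofReal γ'.toReal := (ENNReal.ofReal_toReal hγt).symm
    set γ := γ'.toReal
    set ρ := min ρ0 (ρ0 / (2 * γ)) with hρdef
    have hρ : 0 < ρ := lt_min hρ0 (by positivity)
    have h := (le_iSup₂ (f := fun (ρ : ℝ) (_ : 0 < ρ) =>
      ⨅ (p : X × Y) (_ : dist p.1 xbar < ρ ∧ 0 < f p ∧ f p < (ρ : EReal)),
        max (slopeRho f ρ p) (g p)) ρ hρ).trans_lt hγ'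
    simp only [iInf_lt_iff] at h
    obtain ⟨p, ⟨h1, h2, h3⟩, h4⟩ := h
    have hle : ρ ≤ ρ0 := min_le_left _ _
    refine iInf₂_le_of_le p ⟨h1.trans_le hle, h2, h3.trans_le (EReal.coe_le_coe_iff.2 hle)⟩ ?_
    apply max_le
    · have hs := (le_max_left _ _).trans_lt h4
      rw [hγe] at hs ⊢
      refine aux_subdiff_le f hfbot hconv hρ h3.ne_top hγ0 ?_ hs
      have : ρ ≤ ρ0 / (2 * γ) := min_le_right _ _
      rw [le_div_iff₀ (by positivity)] at this
      linarith
    · exact ((le_max_right _ _).trans_lt h4).le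

/-- Proposition "Relationships between slopes", the convex case (v)(b):
if `f` is convex then the primal and subdifferential strict slopes coincide,
the nonlocal ρ-slope equals the maximum of the ρ-slope and the normalized value,
and the three primal strict slopes coincide. -/
theorem strict_slopes_eq_of_convex {X Y : Type*}
    [NormedAddCommGroup X] [NormedSpace ℝ X] [NormedAddCommGroup Y] [NormedSpace ℝ Y]
    (xbar : X) (ybar : Y) (f : X × Y → EReal)
    (hfbot : ∀ p : X × Y, f p ≠ ⊥)
    (hf0 : f (xbar, ybar) = 0)
    (hP1 : ∀ p : X × Y, p.2 ≠ ybar → 0 < f p)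
    (hP2 : ∃ c : ℝ, 0 < c ∧ ∃ ε : ℝ, 0 < ε ∧ ∀ p : X × Y,
      0 < f p → f p < (ε : EReal) → ((c * dist p.2 ybar : ℝ) : EReal) ≤ f p)
    (hconv : ∀ p q : X × Y, ∀ t : ℝ, 0 ≤ t → t ≤ 1 →
      f (t • p + (1 - t) • q) ≤ ((t : ℝ) : EReal) * f p + ((1 - t : ℝ) : EReal) * f q) :
    strictOuterSlope f xbar ybar = strictOuterSubdiffSlope f xbar ybar ∧
    modStrictOuterSlope f xbar ybar = modStrictOuterSubdiffSlope f xbar ybar ∧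
    (∀ ρ : ℝ, 0 < ρ → ∀ p : X × Y, 0 < f p → f p < ⊤ →
      nonlocalSlopeRho f ρ p =
        max (slopeRho f ρ p)
          (ENNReal.ofReal ((f p).toReal) / ENNReal.ofReal (dRho ρ p (xbar, ybar)))) ∧
    uniformStrictOuterSlope f xbar ybar = modStrictOuterSlope f xbar ybar ∧
    modStrictOuterSlope f xbar ybar = strictOuterSlope f xbar ybar := by
  have hnl : ∀ ρ : ℝ, 0 < ρ → ∀ p : X × Y, 0 < f p → f p < ⊤ →
      ENNReal.ofReal ((f p).toReal) / ENNReal.ofReal (dRho ρ p (xbar, ybar)) ≤ slopeRho f ρ p := by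
    intro ρ hρ p hp0 hp
    have hne : (xbar, ybar) ≠ p := by
      rintro rfl
      exact hp0.ne' hf0
    refine le_trans ?_ (aux_global f hfbot hconv hρ hp.ne hne)
    rw [hf0, sub_zero, aux_dRho_comm]
    gcongr
    exact le_max_left _ _
  have hms : modStrictOuterSlope f xbar ybar = strictOuterSlope f xbar ybar := by
    apply le_antisymm
    · apply iSup₂_le
      intro ρ0 hρ0
      apply le_of_forall_gt_imp_ge_of_dense
      intro γ' hγ'
      by_cases hγt : γ' = ⊤
      · simp [hγt]
      have hγ0 : 0 < γ'.toReal := ENNReal.toReal_pos (ne_bot_of_gt hγ') hγt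
      have hγe : γ' = ENNReal.ofReal γ'.toReal := (ENNReal.ofReal_toReal hγt).symm
      set γ := γ'.toReal
      obtain ⟨c, hc, ε, hε, hP2⟩ := hP2
      set ρ := min (min ρ0 ε) (c / γ) with hρdef
      have hρ : 0 < ρ := lt_min (lt_min hρ0 hε) (by positivity)
      have h := (le_iSup₂ (f := fun (ρ : ℝ) (_ : 0 < ρ) =>
        ⨅ (p : X × Y) (_ : dist p.1 xbar < ρ ∧ 0 < f p ∧ f p < (ρ : EReal)),
          slopeRho f ρ p) ρ hρ).trans_lt hγ'
      simp only [iInf_lt_iff] at h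
      obtain ⟨p, ⟨h1, h2, h3⟩, h4⟩ := h
      have hle : ρ ≤ ρ0 := (min_le_left _ _).trans (min_le_left _ _)
      have hle2 : ρ ≤ ε := (min_le_left _ _).trans (min_le_right _ _)
      refine iInf₂_le_of_le p ⟨h1.trans_le hle, h2, h3.trans_le (EReal.coe_le_coe_iff.2 hle)⟩ ?_
      apply max_le ((aux_slope_anti f hle p).trans h4.le)
      have h5 := (hnl ρ hρ p h2 h3.lt_top).trans_lt h4
      have h6 := hP2 p h2 (h3.trans_le (EReal.coe_le_coe_iff.2 hle2))
      obtain ⟨a, ha⟩ := aux_real (hfbot p) h3.ne_top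
      rw [ha, EReal.coe_le_coe_iff] at h6
      have ha0 : 0 < a := by rw [ha] at h2; exact_mod_cast h2
      have hne : p ≠ (xbar, ybar) := by
        rintro rfl
        exact h2.ne' hf0
      have hd := aux_dRho_pos hρ hne
      rw [ha, EReal.toReal_coe, hγe, ← ENNReal.ofReal_div_of_pos hd,
        ENNReal.ofReal_lt_ofReal_iff hγ0, div_lt_iff₀ hd] at h5
      have h7 : ρ * γ ≤ c := by
        have : ρ ≤ c / γ := min_le_right _ _
        rwa [le_div_iff₀ hγ0] at this
      have h8 : a < γ * dist p.1 xbar := by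
        by_contra hcon
        push Not at hcon
        have h9 : γ * (ρ * dist p.2 ybar) ≤ a := by
          have := mul_le_mul_of_nonneg_right h7 (dist_nonneg (x := p.2) (y := ybar))
          linarith
        have : γ * dRho ρ p (xbar, ybar) ≤ a := by
          unfold dRho
          rw [mul_max_of_nonneg _ _ hγ0.le]
          exact max_le hcon h9
        linarith
      have h10 : 0 < dist p.1 xbar := by
        by_contra hcon
        have : dist p.1 xbar = 0 := le_antisymm (not_lt.1 hcon) dist_nonneg
        rw [this] at h8
        linarith
      rw [ha, EReal.toReal_coe, hγe, ← ENNReal.ofReal_div_of_pos h10]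
      apply ENNReal.ofReal_le_ofReal
      rw [div_le_iff₀ h10]
      exact h8.le
    · exact iSup₂_mono fun ρ hρ => iInf₂_mono fun p hp => le_max_left _ _
  have hus : uniformStrictOuterSlope f xbar ybar = strictOuterSlope f xbar ybar := by
    unfold uniformStrictOuterSlope strictOuterSlope
    refine iSup_congr fun ρ => iSup_congr fun hρ => iInf_congr fun p => iInf_congr fun hp => ?_
    exact aux_nonlocal f hfbot hconv hρ hp.2.1 hp.2.2.ne_top
  refine ⟨?_, aux_eq xbar f hfbot hconv _, ?_, hus.trans hms.symm, hms⟩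
  · have := aux_eq xbar f hfbot hconv (fun _ => 0)
    unfold strictOuterSlope strictOuterSubdiffSlope
    simpa only [zero_le, max_eq_left] using this
  · intro ρ hρ p hp0 hp
    rw [aux_nonlocal f hfbot hconv hρ hp0 hp.ne, max_eq_left (hnl ρ hρ p hp0 hp)]
end
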